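/- Let X be a complex Hilbert space, let A and B be closed linear relations in X forming a dual pair (A ⊆ B*) such that (A*)_s(f) = B_s(f) for all f ∈ D(B), (B*)_s(f) = A_s(f) for all f ∈ D(A), B*(0) ∩ N(A*) = {0}, and A*(0) ∩ N(B*) = {0}. Suppose Ã is a proper extension of {A,B} (a closed relation with A ⊆ Ã ⊆ B*) satisfying dim(D(B*)/D(Ã)) = dim(D(Ã)/D(A)). Then Ã is a quasi-selfadjoint extension of {A,B}, i.e., dim(D(Ã)/D(A)) = dim(D((Ã)*)/D(B)). -/

import Mathlib

/-!
The operator-part hypotheses say that the range of `A_s` is orthogonal to `B*(0)`. If `y ∈ B*(0)`,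
then the component of `y` orthogonal to `A(0)` is therefore orthogonal to the whole range of `A`,
so it lies in `B*(0) ∩ N(A*) = 0`. Hence `B*(0) = A(0)` and, symmetrically, `A*(0) = B(0)`
(`relMul_adjRel_le`). Consequently `B*` and `At` have the same multivalued part, as do `At*` and
`B`, so that passing from relations to domains does not change the quotient dimensions
(`rank_quotient_map`): `dim D(B*)/D(At) = dim B*/At` and `dim D(At*)/D(B) = dim At*/B`.

In the Hilbert space `X ⊕ X`, the adjoint is the orthogonal complement up to the rotation
`(x, y) ↦ (y, -x)`, and `dim V/U = dim Uᗮ/Vᗮ` for closed `U ≤ V` (`rank_quotient_orthogonal`).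
Thus `dim B*/At = dim At*/B`, and so `dim D(B*)/D(At) = dim D(At*)/D(B)`; the assumption on `At`
finishes the argument.
-/

local notation "⟪" x ", " y "⟫" => @inner ℂ _ _ x y

noncomputable section

variable {X : Type*} [NormedAddCommGroup X] [InnerProductSpace ℂ X]

/-- The adjoint `T*` of a linear relation `T ⊆ X × X`:
`T* = {(f,g) : ⟪g,x⟫ = ⟪f,y⟫ for all (x,y) ∈ T}`. -/
def adjRel (T : Submodule ℂ (X × X)) : Submodule ℂ (X × X) where
  carrier := {p | ∀ q ∈ T, ⟪p.2, q.1⟫ = ⟪p.1, q.2⟫}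
  add_mem' := by
    intro p p' hp hp' q hq
    simp only [Prod.fst_add, Prod.snd_add, inner_add_left, hp q hq, hp' q hq]
  zero_mem' := by intro q hq; simp
  smul_mem' := by
    intro c p hp q hq
    simp only [Prod.smul_fst, Prod.smul_snd, inner_smul_left, hp q hq]

/-- The domain `D(T)` of a linear relation. -/
def relDom (T : Submodule ℂ (X × X)) : Submodule ℂ X := T.map (LinearMap.fst ℂ X X)

/-- The multivalued part `T(0) = {y : (0,y) ∈ T}` of a linear relation. -/
def relMul (T : Submodule ℂ (X × X)) : Submodule ℂ X := T.comap (LinearMap.inr ℂ X X)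

/-- The null space `N(T) = {x : (x,0) ∈ T}` of a linear relation. -/
def relKer (T : Submodule ℂ (X × X)) : Submodule ℂ X := T.comap (LinearMap.inl ℂ X X)

/-- The operator part `T_s` of a (closed) linear relation, sending `f ∈ D(T)` to the unique
element of `T(f)` orthogonal to `T(0)` (junk value `0` outside `D(T)`). -/
def opPart (T : Submodule ℂ (X × X)) (f : X) : X :=
  @dite X (∃ y, (f, y) ∈ T ∧ y ∈ (relMul T)ᗮ) (Classical.dec _)
    (fun h => h.choose) (fun _ => 0)

/-- The composition `S ∘ T = {(x,z) : ∃ y, (x,y) ∈ T and (y,z) ∈ S}` of linear relations. -/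
def relComp (S T : Submodule ℂ (X × X)) : Submodule ℂ (X × X) where
  carrier := {p | ∃ y, (p.1, y) ∈ T ∧ (y, p.2) ∈ S}
  add_mem' := by
    rintro p p' ⟨y, h1, h2⟩ ⟨y', h1', h2'⟩
    exact ⟨y + y', T.add_mem h1 h1', S.add_mem h2 h2'⟩
  zero_mem' := ⟨0, T.zero_mem, S.zero_mem⟩
  smul_mem' := by
    rintro c p ⟨y, h1, h2⟩
    exact ⟨c • y, T.smul_mem c h1, S.smul_mem c h2⟩

/-- `N(1 + R) = {x : (x, -x) ∈ R}` for a linear relation `R`. -/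
def relKerOnePlus (R : Submodule ℂ (X × X)) : Submodule ℂ X :=
  R.comap ((LinearMap.id : X →ₗ[ℂ] X).prod (-LinearMap.id))

/-- The dimension of the quotient `U / V` (for submodules `V ⊆ U`). -/
def quotDim (U V : Submodule ℂ X) : Cardinal :=
  Module.rank ℂ (↥U ⧸ V.comap U.subtype)

/-- The relation `S = [[0, A], [B, 0]]` in `X² × X²` associated with a dual pair `{A, B}`:
`S = {((x₁,x₂),(y₁,y₂)) : (x₁,y₂) ∈ B and (x₂,y₁) ∈ A}`. -/
def dualS (A B : Submodule ℂ (X × X)) : Submodule ℂ ((X × X) × (X × X)) where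
  carrier := {p | (p.1.1, p.2.2) ∈ B ∧ (p.1.2, p.2.1) ∈ A}
  add_mem' := by
    rintro p p' ⟨h1, h2⟩ ⟨h1', h2'⟩
    exact ⟨B.add_mem h1 h1', A.add_mem h2 h2'⟩
  zero_mem' := ⟨B.zero_mem, A.zero_mem⟩
  smul_mem' := by
    rintro c p ⟨h1, h2⟩
    exact ⟨B.smul_mem c h1, A.smul_mem c h2⟩

/-- The adjoint of a linear relation in `X × X`, where `X × X` carries the product
inner product `⟪(x₁,x₂),(u₁,u₂)⟫ = ⟪x₁,u₁⟫ + ⟪x₂,u₂⟫`. -/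
def adjRel2 (S : Submodule ℂ ((X × X) × (X × X))) : Submodule ℂ ((X × X) × (X × X)) where
  carrier := {p | ∀ q ∈ S,
    ⟪p.2.1, q.1.1⟫ + ⟪p.2.2, q.1.2⟫ = ⟪p.1.1, q.2.1⟫ + ⟪p.1.2, q.2.2⟫}
  add_mem' := by
    intro p p' hp hp' q hq
    simp only [Prod.fst_add, Prod.snd_add, inner_add_left]
    rw [show ∀ a b c d : ℂ, a + b + (c + d) = a + c + (b + d) by intros; ring,
      hp q hq, hp' q hq]; ring
  zero_mem' := by intro q hq; simp
  smul_mem' := by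
    intro c p hp q hq
    simp only [Prod.smul_fst, Prod.smul_snd, inner_smul_left, ← mul_add, hp q hq]

/-- For a relation `R` on `X × X` and `c : ℂ`, the subspace `{f : (f, c • f) ∈ R}`;
for `R = S*` and `c = ∓i` this is the deficiency space `N(S* ± i)`. -/
def eigenSp (R : Submodule ℂ ((X × X) × (X × X))) (c : ℂ) : Submodule ℂ (X × X) :=
  R.comap ((LinearMap.id : (X × X) →ₗ[ℂ] (X × X)).prod (c • LinearMap.id))

open Submodule

/-- A linear map whose kernel meets `V` inside `U` does not change the dimension of `V / U`. -/
lemma rank_quotient_map.{u} {H Y : Type u} [AddCommGroup H] [Module ℂ H] [AddCommGroup Y] [Module ℂ Y]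
    (π : H →ₗ[ℂ] Y) (U V : Submodule ℂ H) (hUV : U ≤ V)
    (hker : ∀ v ∈ V, π v = 0 → v ∈ U) :
    Module.rank ℂ (↥(V.map π) ⧸ (U.map π).comap (V.map π).subtype) =
      Module.rank ℂ (↥V ⧸ U.comap V.subtype) := by
  let g : V →ₗ[ℂ] ↥(V.map π) ⧸ (U.map π).comap (V.map π).subtype :=
    (mkQ _).comp (π.submoduleMap V)
  have hg : Function.Surjective g :=
    (mkQ_surjective _).comp (π.submoduleMap_surjective V)
  have hk : LinearMap.ker g = U.comap V.subtype := by
    ext v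
    have : v ∈ LinearMap.ker g ↔ ∃ u ∈ U, π u = π v := by
      simp [g, LinearMap.mem_ker, LinearMap.comp_apply, Submodule.Quotient.mk_eq_zero]
    rw [this]
    constructor
    · rintro ⟨u, hu, huv⟩
      have h := hker (v - u) (V.sub_mem v.2 (hUV hu)) (by simp [huv])
      simpa using U.add_mem h hu
    · intro hv
      exact ⟨v, hv, rfl⟩
  rw [← hk]
  exact (g.quotKerEquivOfSurjective hg).rank_eq.symm

/-- For a closed subspace `U ≤ V`, the part of `V` orthogonal to `U` represents `V / U`. -/
lemma rank_quotient_eq_inf {H : Type*} [NormedAddCommGroup H] [InnerProductSpace ℂ H]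
    (U V : Submodule ℂ H) [U.HasOrthogonalProjection] (hUV : U ≤ V) :
    Module.rank ℂ (↥V ⧸ U.comap V.subtype) = Module.rank ℂ ↥(V ⊓ Uᗮ) := by
  let g : ↥(V ⊓ Uᗮ) →ₗ[ℂ] (↥V ⧸ U.comap V.subtype) :=
    (mkQ _).comp (inclusion inf_le_left)
  refine (LinearEquiv.ofBijective g ⟨?_, ?_⟩).rank_eq.symm
  · rw [← LinearMap.ker_eq_bot, LinearMap.ker_eq_bot']
    rintro ⟨v, hvV, hv⟩ h
    have hvU : v ∈ U := by
      simpa [g, Submodule.Quotient.mk_eq_zero] using h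
    have h0 : inner ℂ v v = 0 := hv v hvU
    exact Subtype.ext (inner_self_eq_zero.1 h0)
  · intro q
    obtain ⟨v, rfl⟩ := mkQ_surjective _ q
    have hp : (U.starProjection v) ∈ U := U.starProjection_apply_mem v
    refine ⟨⟨v - U.starProjection v, V.sub_mem v.2 (hUV hp),
      U.sub_starProjection_mem_orthogonal v⟩, ?_⟩
    refine (Submodule.Quotient.eq _).2 ?_
    simp

lemma rank_quotient_orthogonal {H : Type*} [NormedAddCommGroup H] [InnerProductSpace ℂ H]
    (U V : Submodule ℂ H) [U.HasOrthogonalProjection] [V.HasOrthogonalProjection] (hUV : U ≤ V) :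
    Module.rank ℂ (↥V ⧸ U.comap V.subtype) = Module.rank ℂ (↥Uᗮ ⧸ Vᗮ.comap Uᗮ.subtype) := by
  rw [rank_quotient_eq_inf U V hUV, rank_quotient_eq_inf Vᗮ Uᗮ (orthogonal_le hUV),
    orthogonal_orthogonal, inf_comm]

lemma isClosed_adjRel (T : Submodule ℂ (X × X)) : IsClosed (adjRel T : Set (X × X)) := by
  have : (adjRel T : Set (X × X)) = ⋂ q ∈ T, {p : X × X | ⟪p.2, q.1⟫ = ⟪p.1, q.2⟫} := by
    ext p
    simp [adjRel]
  rw [this]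
  exact isClosed_biInter fun q _ => isClosed_eq (by fun_prop) (by fun_prop)

lemma isClosed_relMul {T : Submodule ℂ (X × X)} (hT : IsClosed (T : Set (X × X))) :
    IsClosed (relMul T : Set X) :=
  hT.preimage (f := fun y : X => ((0 : X), y)) (by fun_prop)

lemma adjRel_antitone {S T : Submodule ℂ (X × X)} (h : S ≤ T) : adjRel T ≤ adjRel S :=
  fun _ hp q hq => hp q (h hq)

lemma le_adjRel_symm {A B : Submodule ℂ (X × X)} (h : A ≤ adjRel B) : B ≤ adjRel A := by
  intro q hq p hp
  have := congrArg (starRingEnd ℂ) (h hp q hq)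
  simpa using this.symm

lemma opPart_spec [CompleteSpace X] {T : Submodule ℂ (X × X)} (hT : IsClosed (T : Set (X × X)))
    {f : X} (hf : f ∈ relDom T) : (f, opPart T f) ∈ T ∧ opPart T f ∈ (relMul T)ᗮ := by
  have : CompleteSpace (relMul T) := (isClosed_relMul hT).completeSpace_coe
  have hex : ∃ y, (f, y) ∈ T ∧ y ∈ (relMul T)ᗮ := by
    obtain ⟨⟨x, y⟩, hxy, rfl⟩ := hf
    refine ⟨y - (relMul T).starProjection y, ?_, (relMul T).sub_starProjection_mem_orthogonal y⟩
    have h : ((0 : X), (relMul T).starProjection y) ∈ T :=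
      (relMul T).starProjection_apply_mem y
    simpa using T.sub_mem hxy h
  unfold opPart
  rw [dif_pos hex]
  exact hex.choose_spec

/-- The multivalued part of `B*` is no larger than that of `A`. The component of `y ∈ B*(0)`
orthogonal to `A(0)` is orthogonal to the range of `A_s = (B*)_s`, hence to the range of `A`. -/
lemma relMul_adjRel_le [CompleteSpace X] {A B : Submodule ℂ (X × X)}
    (hA : IsClosed (A : Set (X × X))) (hdual : A ≤ adjRel B)
    (hopA : ∀ f ∈ relDom A, opPart (adjRel B) f = opPart A f)
    (hmul : relMul (adjRel B) ⊓ relKer (adjRel A) = ⊥) :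
    relMul (adjRel B) ≤ relMul A := by
  have : CompleteSpace (relMul A) := (isClosed_relMul hA).completeSpace_coe
  intro y hy
  have hp : (relMul A).starProjection y ∈ relMul A := (relMul A).starProjection_apply_mem y
  have hy1 : y - (relMul A).starProjection y ∈ relMul (adjRel B) :=
    sub_mem hy (hdual hp)
  have hy2 : y - (relMul A).starProjection y ∈ relKer (adjRel A) := by
    rintro ⟨x, z⟩ hxz
    have hx : x ∈ relDom A := ⟨_, hxz, rfl⟩
    obtain ⟨h1, -⟩ := opPart_spec hA hx
    have h2 := (opPart_spec (isClosed_adjRel B) (f := x) ⟨_, hdual hxz, rfl⟩).2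
    rw [hopA x hx] at h2
    have hm : z - opPart A x ∈ relMul A := by
      have := A.sub_mem hxz h1
      simpa [relMul] using this
    have e1 := h2 _ hy1
    have e2 := (mem_orthogonal' _ _).1
      ((relMul A).sub_starProjection_mem_orthogonal y) _ hm
    have e3 : inner ℂ (y - (relMul A).starProjection y) z = 0 := by
      rw [inner_sub_right, e1, sub_zero] at e2
      exact e2
    simpa using e3.symm
  have h0 : y - (relMul A).starProjection y ∈ (⊥ : Submodule ℂ X) := hmul ▸ ⟨hy1, hy2⟩
  rw [mem_bot, sub_eq_zero] at h0
  rw [h0]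
  exact hp

/-- The Hilbert space `X ⊕ X`; the product type `X × X` itself carries the sup norm. -/
abbrev HilbertSum (X : Type*) := WithLp 2 (X × X)

/-- The identification of the Hilbert space `X ⊕ X` with `X × X`. -/
def plain (X : Type*) [NormedAddCommGroup X] [InnerProductSpace ℂ X] :
    HilbertSum X →L[ℂ] X × X :=
  (WithLp.prodContinuousLinearEquiv 2 ℂ X X : HilbertSum X →L[ℂ] X × X)

/-- The rotation `(x, y) ↦ (y, -x)`, as a map from the Hilbert space `X ⊕ X` to `X × X`. -/
def rot (X : Type*) [NormedAddCommGroup X] [InnerProductSpace ℂ X] :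
    HilbertSum X →L[ℂ] X × X :=
  ((ContinuousLinearMap.snd ℂ X X).prod (-ContinuousLinearMap.fst ℂ X X)).comp (plain X)

/-- Up to rotation of its argument, the orthogonal complement is the adjoint. -/
lemma orthogonal_comap_plain (T : Submodule ℂ (X × X)) :
    (T.comap (plain X).toLinearMap)ᗮ = (adjRel T).comap (rot X).toLinearMap := by
  ext h
  rw [mem_orthogonal']
  constructor
  · rintro H ⟨x, y⟩ hq
    have := H (WithLp.toLp 2 (x, y)) hq
    rw [WithLp.prod_inner_apply] at this
    change ⟪-h.fst, x⟫ = ⟪h.snd, y⟫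
    rw [inner_neg_left, neg_eq_iff_add_eq_zero]
    exact this
  · intro H u hu
    have h1 : ⟪-h.fst, u.fst⟫ = ⟪h.snd, u.snd⟫ := H _ hu
    rw [inner_neg_left, neg_eq_iff_add_eq_zero] at h1
    rw [WithLp.prod_inner_apply]
    exact h1

/-- The adjoint is the orthogonal complement of the rotated relation. -/
lemma orthogonal_comap_rot (T : Submodule ℂ (X × X)) :
    (T.comap (rot X).toLinearMap)ᗮ = (adjRel T).comap (plain X).toLinearMap := by
  ext h
  rw [mem_orthogonal']
  constructor
  · rintro H ⟨x, y⟩ hq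
    have hq' : WithLp.toLp 2 (-y, x) ∈ T.comap (rot X).toLinearMap := by
      change (x, - -y) ∈ T
      rwa [neg_neg]
    have h1 := H _ hq'
    rw [WithLp.prod_inner_apply] at h1
    have h2 : ⟪h.fst, -y⟫ + ⟪h.snd, x⟫ = 0 := h1
    change ⟪h.snd, x⟫ = ⟪h.fst, y⟫
    rw [inner_neg_right] at h2
    linear_combination h2
  · intro H u hu
    have h1 : ⟪h.snd, u.snd⟫ = ⟪h.fst, -u.fst⟫ := H _ hu
    rw [inner_neg_right] at h1
    rw [WithLp.prod_inner_apply]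
    change ⟪h.fst, u.fst⟫ + ⟪h.snd, u.snd⟫ = 0
    rw [h1]
    ring

/-- If `S ≤ T` have the same multivalued part, `D(T) / D(S)` has the dimension of `T / S`, where
the relations are pulled back along a linear surjection `φ` with values in `X × X`. -/
lemma quotDim_relDom_eq_rank {S T : Submodule ℂ (X × X)} (hST : S ≤ T)
    (hmul : relMul T ≤ relMul S) (φ : HilbertSum X →ₗ[ℂ] X × X) (hφ : Function.Surjective φ) :
    quotDim (relDom T) (relDom S) =
      Module.rank ℂ (↥(T.comap φ) ⧸ (S.comap φ).comap (T.comap φ).subtype) := by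
  have hdom (R : Submodule ℂ (X × X)) :
      relDom R = (R.comap φ).map ((LinearMap.fst ℂ X X).comp φ) := by
    rw [map_comp, map_comap_eq_of_surjective hφ, relDom]
  have := rank_quotient_map ((LinearMap.fst ℂ X X).comp φ) (S.comap φ) (T.comap φ)
    (comap_mono hST) (by
      intro v hv h0
      have hv' : φ v ∈ T := hv
      have h0' : φ v = (0, (φ v).2) := Prod.ext h0 rfl
      change φ v ∈ S
      rw [h0'] at hv' ⊢
      exact hmul hv')
  rw [quotDim, hdom, hdom]
  exact this

lemma plain_surjective : Function.Surjective (plain X).toLinearMap :=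
  fun p => ⟨WithLp.toLp 2 p, rfl⟩

lemma rot_surjective : Function.Surjective (rot X).toLinearMap :=
  fun p => ⟨WithLp.toLp 2 (-p.2, p.1), Prod.ext rfl (neg_neg p.2)⟩

/-- Theorem 3.4. If a proper extension `At` of `{A,B}` satisfies
`dim(D(B*)/D(At)) = dim(D(At)/D(A))`, then `At` is a quasi-selfadjoint extension, i.e.
`dim(D(At)/D(A)) = dim(D(At*)/D(B))`. -/
theorem quasi_selfadjoint_of_quotDim_eq [CompleteSpace X] (A B At : Submodule ℂ (X × X))
    (hA : IsClosed (A : Set (X × X))) (hB : IsClosed (B : Set (X × X)))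
    (hdual : A ≤ adjRel B)
    (hopB : ∀ f ∈ relDom B, opPart (adjRel A) f = opPart B f)
    (hopA : ∀ f ∈ relDom A, opPart (adjRel B) f = opPart A f)
    (hmul1 : relMul (adjRel B) ⊓ relKer (adjRel A) = ⊥)
    (hmul2 : relMul (adjRel A) ⊓ relKer (adjRel B) = ⊥)
    (hAt : IsClosed (At : Set (X × X))) (hAAt : A ≤ At) (hAtB : At ≤ adjRel B)
    (h37 : quotDim (relDom (adjRel B)) (relDom At) = quotDim (relDom At) (relDom A)) :
    quotDim (relDom At) (relDom A) = quotDim (relDom (adjRel At)) (relDom B) := by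
  have hdual' : B ≤ adjRel A := le_adjRel_symm hdual
  have hBAt : B ≤ adjRel At := le_adjRel_symm hAtB
  have hm1 : relMul (adjRel B) ≤ relMul A := relMul_adjRel_le hA hdual hopA hmul1
  have hm2 : relMul (adjRel A) ≤ relMul B := relMul_adjRel_le hB hdual' hopB hmul2
  have hm3 : relMul (adjRel B) ≤ relMul At := hm1.trans (comap_mono hAAt)
  have hm4 : relMul (adjRel At) ≤ relMul B :=
    (comap_mono (adjRel_antitone hAAt)).trans hm2
  have c1 : CompleteSpace (At.comap (plain X).toLinearMap) :=
    (hAt.preimage (plain X).continuous).completeSpace_coe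
  have c2 : CompleteSpace ((adjRel B).comap (plain X).toLinearMap) :=
    ((isClosed_adjRel B).preimage (plain X).continuous).completeSpace_coe
  have c3 : CompleteSpace (B.comap (rot X).toLinearMap) :=
    (hB.preimage (rot X).continuous).completeSpace_coe
  have hperp : ((adjRel B).comap (plain X).toLinearMap)ᗮ = B.comap (rot X).toLinearMap := by
    rw [← orthogonal_comap_rot, orthogonal_orthogonal]
  have key := rank_quotient_orthogonal (At.comap (plain X).toLinearMap)
    ((adjRel B).comap (plain X).toLinearMap) (comap_mono hAtB)
  rw [hperp, orthogonal_comap_plain] at key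
  rw [← h37, quotDim_relDom_eq_rank hAtB hm3 _ plain_surjective,
    quotDim_relDom_eq_rank hBAt hm4 _ rot_surjective]
  exact key

end
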